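/- arXiv:1210.1272 — 6 statements merged into one kernel-verified Lean document; each statement's English description precedes it below -/
import Mathlib

section
/- (Proposition 1, quantum case.) In the quantum detection-loophole scenario, suppose there exists c : ℬ → ℝ with c(b) > 0 such that Σ_i p_i Tr(ρ_A Σ_{B∈𝒪} M^i_{B,b}) = c(b) for every A ∈ M and b ∈ ℬ (the click probability is independent of the message state). Define, for each a, b for which the denominator Σ_{i,A} p_i P(A|a) Tr(ρ_A Σ_{B'} M^i_{B',b}) is strictly positive, P_DL(B|a,b) := (Σ_{i,A} p_i P(A|a) Tr(ρ_A M^i_{B,b})) / (Σ_{i,A} p_i P(A|a) Tr(ρ_A Σ_{B'} M^i_{B',b})). Then there exist d × d complex density matrices σ_a (for a ∈ 𝒜) and positive semidefinite d × d complex matrices N_{B,b} (for B ∈ 𝒪, b ∈ ℬ) with Tr(σ_a Σ_{B∈𝒪} N_{B,b}) = 1 for every a, b, such that P_DL(B|a,b) = Tr(σ_a N_{B,b}) for all B, a, b; one may take σ_a = Σ_A P(A|a) ρ_A and N_{B,b} = (Σ_i p_i M^i_{B,b}) / c(b). -/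
open Matrix
open scoped ComplexOrder

/-! Bob's strategy and Alice's message are drawn independently, so by bilinearity of
`(σ, N) ↦ Tr (σ N)` the joint probability of a click with a given outcome is the Born weight of
Alice's average state against Bob's average effect. When the click probability `c` is the same for
every message, it is also the click probability of each average state; postselecting on a click is
then division by a constant that does not depend on Alice's input, and this constant can be absorbed
into Bob's effects. -/

namespace DetectionLoophole

variable {ι κ n : Type*} [Fintype ι] [Fintype κ]

section CommSemiring

variable {R : Type*} [CommSemiring R]

/-- The mixture of the matrices `X i` with weights `w i`. It serves both for Alice's average state
`∑ A, P(A|a) ρ_A` and for Bob's average effect `∑ i, p_i M^i_{B,b}`. Weights are scalars of the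
matrix ring, so that a real distribution enters through its cast. -/
def mixture (w : ι → R) (X : ι → Matrix n n R) : Matrix n n R :=
  ∑ i, w i • X i

theorem sum_mixture {β : Type*} [Fintype β] (w : ι → R) (X : β → ι → Matrix n n R) :
    ∑ b, mixture w (X b) = mixture w fun i ↦ ∑ b, X b i := by
  simp only [mixture, Finset.smul_sum]
  exact Finset.sum_comm

variable [Fintype n]

theorem trace_mixture_eq_of_forall_trace_eq {w : ι → R} (hw : ∑ i, w i = 1)
    {X : ι → Matrix n n R} {t : R} (hX : ∀ i, (X i).trace = t) : (mixture w X).trace = t := by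
  simp only [mixture, trace_sum, trace_smul, hX, smul_eq_mul, ← Finset.sum_mul, hw, one_mul]

/-- The joint probability of a click and of the outcome with effect `E i`, when strategies `i` and
messages `A` are drawn independently with weights `p` and `q` and `A` is sent as the state `ρ A`.
With `E i` the sum of all effects of strategy `i` this is the click probability. -/
def jointProb (p : ι → R) (q : κ → R) (ρ : κ → Matrix n n R) (E : ι → Matrix n n R) : R :=
  ∑ i, ∑ A, p i * q A * (ρ A * E i).trace

theorem trace_mixture_mul_mixture (p : ι → R) (q : κ → R) (ρ : κ → Matrix n n R)
    (E : ι → Matrix n n R) : (mixture q ρ * mixture p E).trace = jointProb p q ρ E := by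
  simp only [mixture, jointProb, Finset.mul_sum, Finset.sum_mul, trace_sum, Matrix.mul_smul,
    smul_mul, trace_smul, smul_eq_mul, mul_assoc]

theorem jointProb_eq_of_forall_message {p : ι → R} {q : κ → R} (hq : ∑ A, q A = 1)
    {ρ : κ → Matrix n n R} {E : ι → Matrix n n R} {c : R}
    (h : ∀ A, ∑ i, p i * (ρ A * E i).trace = c) : jointProb p q ρ E = c := calc
  jointProb p q ρ E = ∑ A, q A * ∑ i, p i * (ρ A * E i).trace := by
    simp only [jointProb, Finset.mul_sum, mul_assoc, mul_left_comm]
    exact Finset.sum_comm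
  _ = c := by simp only [h, ← Finset.sum_mul, hq, one_mul]

end CommSemiring

theorem posSemidef_mixture {R : Type*} [CommRing R] [PartialOrder R] [StarRing R]
    [StarOrderedRing R] {w : ι → R} (hw : ∀ i, 0 ≤ w i) {X : ι → Matrix n n R}
    (hX : ∀ i, (X i).PosSemidef) : (mixture w X).PosSemidef :=
  posSemidef_sum _ fun i _ ↦ (hX i).smul (hw i)

section Field

variable {K : Type*} [Field K]

/-- Bob's average effect renormalized by a click probability `c`; for the outcome `B` and the input
`b` this is `N_{B,b}`. The constant `c` is a parameter because one effect has to serve for all of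
Alice's states; at `c = 0` the effect is the junk value `0`. -/
def postselectedEffect (p : ι → K) (c : K) (E : ι → Matrix n n K) : Matrix n n K :=
  c⁻¹ • mixture p E

theorem sum_postselectedEffect {β : Type*} [Fintype β] (p : ι → K) (c : K)
    (E : β → ι → Matrix n n K) :
    ∑ b, postselectedEffect p c (E b) = postselectedEffect p c fun i ↦ ∑ b, E b i := by
  simp only [postselectedEffect, ← Finset.smul_sum, sum_mixture]

theorem trace_mixture_mul_postselectedEffect [Fintype n] (p : ι → K) (q : κ → K) (c : K)
    (ρ : κ → Matrix n n K) (E : ι → Matrix n n K) :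
    (mixture q ρ * postselectedEffect p c E).trace = jointProb p q ρ E / c := by
  rw [postselectedEffect, Matrix.mul_smul, trace_smul, trace_mixture_mul_mixture, smul_eq_mul,
    inv_mul_eq_div]

theorem posSemidef_postselectedEffect [PartialOrder K] [StarRing K] [StarOrderedRing K]
    [PosMulReflectLT K] {p : ι → K} (hp : ∀ i, 0 ≤ p i) {c : K} (hc : 0 ≤ c)
    {E : ι → Matrix n n K} (hE : ∀ i, (E i).PosSemidef) : (postselectedEffect p c E).PosSemidef :=
  (posSemidef_mixture hp hE).smul (inv_nonneg.mpr hc)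

end Field

end DetectionLoophole

open DetectionLoophole

theorem prop1_quantum_general
    {K 𝒜 ℬ M 𝒪 I n : Type*} [Field K] [PartialOrder K] [StarRing K] [StarOrderedRing K]
    [PosMulReflectLT K] [Fintype M] [Fintype 𝒪] [Fintype I] [Fintype n]
    (p : I → K) (hp : ∀ i, 0 ≤ p i)
    (P : 𝒜 → M → K) (hP : ∀ a A, 0 ≤ P a A) (hP1 : ∀ a, ∑ A, P a A = 1)
    (ρ : M → Matrix n n K) (hρ : ∀ A, (ρ A).PosSemidef) (hρ1 : ∀ A, (ρ A).trace = 1)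
    (Mv : I → ℬ → 𝒪 → Matrix n n K) (hMv : ∀ i b B, (Mv i b B).PosSemidef)
    (c : ℬ → K) (hc : ∀ b, 0 < c b)
    (hindep : ∀ A b, ∑ i, p i * (ρ A * ∑ B, Mv i b B).trace = c b)
    (PDL : 𝒪 → 𝒜 → ℬ → K)
    (hPDL : ∀ B a b, 0 < jointProb p (P a) ρ (fun i ↦ ∑ B', Mv i b B') →
      PDL B a b =
        jointProb p (P a) ρ (fun i ↦ Mv i b B) /
          jointProb p (P a) ρ (fun i ↦ ∑ B', Mv i b B')) :
    let σ a := mixture (P a) ρ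
    let N B b := postselectedEffect p (c b) fun i ↦ Mv i b B
    (∀ a, (σ a).PosSemidef ∧ (σ a).trace = 1) ∧
      (∀ B b, (N B b).PosSemidef) ∧
      (∀ a b, (σ a * ∑ B, N B b).trace = 1) ∧
      (∀ B a b, PDL B a b = (σ a * N B b).trace) := by
  intro σ N
  have click_eq (a b) : jointProb p (P a) ρ (fun i ↦ ∑ B, Mv i b B) = c b :=
    jointProb_eq_of_forall_message (hP1 a) fun A ↦ hindep A b
  refine ⟨fun a ↦ ⟨posSemidef_mixture (hP a) hρ, trace_mixture_eq_of_forall_trace_eq (hP1 a) hρ1⟩,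
    fun B b ↦ posSemidef_postselectedEffect hp (hc b).le fun i ↦ hMv i b B,
    fun a b ↦ ?normalized, fun B a b ↦ ?statistics⟩
  case normalized =>
    rw [sum_postselectedEffect, trace_mixture_mul_postselectedEffect, click_eq,
      div_self (hc b).ne']
  case statistics =>
    rw [hPDL B a b (by rw [click_eq]; exact hc b), click_eq, trace_mixture_mul_postselectedEffect]

/-- Proposition 1, quantum case: in the quantum detection-loophole
scenario (states `ρ A`, sub-normalized POVMs `Mv i b`), if the click probability
`∑ i, p i * Tr(ρ A * ∑ B, Mv i b B) = c b` is independent of the message state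
(and positive), then the detection-loophole statistics are realized by a quantum
`d`-dimensional model: states `σ a = ∑ A, P(A|a) • ρ A` and positive semidefinite
effects `N B b = (1 / c b) • ∑ i, p i • Mv i b B` with `Tr(σ a * ∑ B, N B b) = 1`
and `P_DL(B|a,b) = Tr(σ a * N B b)`. -/
theorem prop1_quantum
    {𝒜 ℬ M 𝒪 I : Type*}
    [Fintype 𝒜] [Fintype ℬ] [Fintype M] [Fintype 𝒪] [Fintype I]
    [Nonempty 𝒜] [Nonempty ℬ] [Nonempty M] [Nonempty 𝒪] [Nonempty I]
    (d : ℕ) (hd : 1 ≤ d)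
    -- Bob's strategy distribution
    (p : I → ℝ) (hp : ∀ i, 0 ≤ p i) (hp1 : ∑ i, p i = 1)
    -- Alice's message distributions
    (P : 𝒜 → M → ℝ) (hP : ∀ a A, 0 ≤ P a A) (hP1 : ∀ a, ∑ A, P a A = 1)
    -- the d × d density matrices encoding the messages
    (ρ : M → Matrix (Fin d) (Fin d) ℂ)
    (hρ : ∀ A, (ρ A).PosSemidef) (hρ1 : ∀ A, (ρ A).trace = 1)
    -- Bob's sub-normalized POVMs: each element PSD, remainder (no-click) PSD
    (Mv : I → ℬ → 𝒪 → Matrix (Fin d) (Fin d) ℂ)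
    (hMv : ∀ i b B, (Mv i b B).PosSemidef)
    (hMvsub : ∀ i b, (1 - ∑ B, Mv i b B).PosSemidef)
    -- hypothesis: the click probability is independent of the message state
    (c : ℬ → ℝ) (hc : ∀ b, 0 < c b)
    (hindep : ∀ A b, ∑ i, (p i : ℂ) * (ρ A * ∑ B, Mv i b B).trace = (c b : ℂ))
    -- the detection-loophole statistics (defined whenever the denominator is
    -- strictly positive)
    (PDL : 𝒪 → 𝒜 → ℬ → ℂ)
    (hPDL : ∀ B a b,
      (∀ r : ℝ, (∑ i, ∑ A, (p i : ℂ) * (P a A : ℂ) *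
          (ρ A * ∑ B', Mv i b B').trace) = (r : ℂ) → 0 < r) →
      PDL B a b =
        (∑ i, ∑ A, (p i : ℂ) * (P a A : ℂ) * (ρ A * Mv i b B).trace) /
        (∑ i, ∑ A, (p i : ℂ) * (P a A : ℂ) * (ρ A * ∑ B', Mv i b B').trace)) :
    ∃ (σ : 𝒜 → Matrix (Fin d) (Fin d) ℂ)
      (N : 𝒪 → ℬ → Matrix (Fin d) (Fin d) ℂ),
      -- one may take these explicit choices
      (∀ a, σ a = ∑ A, (P a A : ℂ) • ρ A) ∧
      (∀ B b, N B b = ((c b : ℂ))⁻¹ • ∑ i, (p i : ℂ) • Mv i b B) ∧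
      -- σ a is a density matrix
      (∀ a, (σ a).PosSemidef ∧ (σ a).trace = 1) ∧
      -- the effects are positive semidefinite and normalized on the states
      (∀ B b, (N B b).PosSemidef) ∧
      (∀ a b, (σ a * ∑ B, N B b).trace = 1) ∧
      -- and they reproduce the detection-loophole statistics
      (∀ B a b, PDL B a b = (σ a * N B b).trace) := by
  exact ⟨_, _, fun _ ↦ rfl, fun _ _ ↦ rfl, prop1_quantum_general _ (by exact_mod_cast hp) _
    (by exact_mod_cast hP) (by exact_mod_cast hP1) ρ hρ hρ1 Mv hMv (fun b ↦ (c b : ℂ))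
    (by exact_mod_cast hc) hindep PDL fun B a b hpos ↦
      hPDL B a b fun r hr ↦ Complex.zero_lt_real.mp (hpos.trans_eq hr)⟩
end

section
/- (Classical n → 1 random access code bound, used in Corollary 4.) Let n ≥ 2. For every classical strategy with a binary message set M = {0,1}, i.e. probability distributions S(·|a) on {0,1} for each string a ∈ {0,1}ⁿ and probability distributions R(·|A,b) on {0,1} for each A ∈ {0,1}, b ∈ Fin n, there exist a ∈ {0,1}ⁿ and b ∈ Fin n such that Σ_{A∈{0,1}} R(a_b|A,b) S(A|a) ≤ 1/2. In other words, the worst-case success probability of any classical n → 1 random access code is at most 1/2. -/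
/-!
Identify the decoding rule of a message `A` with the point `(R(0|A,b) - 1/2)_b` of `K^ι`. Encoding
`a` produces an affine combination of these points, and it beats `1/2` at every index exactly when
that combination lies in the open orthant whose signs are `(-1)^(a b)`. At most `|ι|` points lie on
a common hyperplane `c ⬝ᵥ x = d` with `c ≠ 0`; such a hyperplane misses an open orthant, namely
one on which `c ⬝ᵥ x > 0` if `d ≤ 0`, and one on which `c ⬝ᵥ x < 0` if `d ≥ 0`. The string labelling
this orthant has an index that is recovered with probability at most `1/2`.
-/

section Hyperplane

open Module

variable {K ι κ : Type*} [Field K] [Fintype ι] [Fintype κ]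

theorem exists_hyperplane_of_card_le [Nonempty κ] (hcard : Fintype.card κ ≤ Fintype.card ι)
    (p : κ → ι → K) : ∃ c : ι → K, c ≠ 0 ∧ ∃ d : K, ∀ k, c ⬝ᵥ p k = d := by
  let defect : (ι → K) × K →ₗ[K] κ → K :=
    LinearMap.pi fun k ↦ (dotProductBilin K K).flip (p k) ∘ₗ LinearMap.fst K _ K
      - LinearMap.snd K (ι → K) K
  have hfinrank : finrank K (κ → K) < finrank K ((ι → K) × K) := by
    simpa [finrank_prod] using Nat.lt_succ_of_le hcard
  obtain ⟨⟨c, d⟩, hker, hne⟩ := Submodule.exists_mem_ne_zero_of_ne_bot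
    (LinearMap.ker_ne_bot_of_finrank_lt (f := defect) hfinrank)
  have hplane (k : κ) : c ⬝ᵥ p k = d := sub_eq_zero.mp (congrFun hker k)
  refine ⟨c, ?_, d, hplane⟩
  rintro rfl
  have hd : d = 0 := by simpa using (hplane (Classical.arbitrary κ)).symm
  exact hne (Prod.ext rfl hd)

end Hyperplane

section Orthant

variable {K ι κ : Type*} [LinearOrder K] [Fintype ι]

theorem exists_orthant_dotProduct_pos [Ring K] [IsStrictOrderedRing K] {c : ι → K} (hc : c ≠ 0) :
    ∃ a : ι → Fin 2, ∀ x : ι → K, (∀ i, 0 < (-1) ^ (a i : ℕ) * x i) → 0 < c ⬝ᵥ x := by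
  let a : ι → Fin 2 := fun i ↦ if 0 ≤ c i then 0 else 1
  have hsign (i : ι) : c i = |c i| * (-1) ^ (a i : ℕ) := by
    by_cases hi : 0 ≤ c i
    · simp [a, hi, abs_of_nonneg hi]
    · simp [a, hi, abs_of_neg (not_le.mp hi)]
  refine ⟨a, fun x hx ↦ ?_⟩
  have hdot : c ⬝ᵥ x = ∑ i, |c i| * ((-1) ^ (a i : ℕ) * x i) :=
    Finset.sum_congr rfl fun i _ ↦ by rw [← mul_assoc, ← hsign]
  obtain ⟨i, hi⟩ := Function.ne_iff.mp hc
  rw [hdot]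
  exact Finset.sum_pos' (fun j _ ↦ mul_nonneg (abs_nonneg _) (hx j).le)
    ⟨i, Finset.mem_univ i, mul_pos (abs_pos.mpr hi) (hx i)⟩

theorem exists_orthant_disjoint_hyperplane [Ring K] [IsStrictOrderedRing K]
    {c : ι → K} (hc : c ≠ 0) (d : K) :
    ∃ a : ι → Fin 2, ∀ x : ι → K, c ⬝ᵥ x = d → ∃ i, (-1) ^ (a i : ℕ) * x i ≤ 0 := by
  rcases le_total d 0 with hd | hd
  · obtain ⟨a, ha⟩ := exists_orthant_dotProduct_pos hc
    refine ⟨a, fun x hx ↦ ?_⟩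
    by_contra! hpos
    exact (ha x hpos).not_ge (hx.trans_le hd)
  · obtain ⟨a, ha⟩ := exists_orthant_dotProduct_pos (neg_ne_zero.mpr hc)
    refine ⟨a, fun x hx ↦ ?_⟩
    by_contra! hpos
    have hneg : -c ⬝ᵥ x ≤ 0 := by rwa [neg_dotProduct, hx, neg_nonpos]
    exact (ha x hpos).not_ge hneg

theorem exists_orthant_disjoint_affine_combinations [Field K] [IsStrictOrderedRing K]
    [Fintype κ] [Nonempty κ]
    (hcard : Fintype.card κ ≤ Fintype.card ι) (p : κ → ι → K) :
    ∃ a : ι → Fin 2, ∀ w : κ → K, ∑ k, w k = 1 →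
      ∃ i, (-1) ^ (a i : ℕ) * ∑ k, w k * p k i ≤ 0 := by
  obtain ⟨c, hc, d, hplane⟩ := exists_hyperplane_of_card_le hcard p
  obtain ⟨a, ha⟩ := exists_orthant_disjoint_hyperplane hc d
  refine ⟨a, fun w hw ↦ ?_⟩
  have hcomb : c ⬝ᵥ (∑ k, w k • p k) = d := by
    simp only [dotProduct_sum, dotProduct_smul, hplane, smul_eq_mul, ← Finset.sum_mul, hw, one_mul]
  simpa only [Finset.sum_apply, Pi.smul_apply, smul_eq_mul] using ha _ hcomb

end Orthant

section RandomAccessCode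

variable {K M : Type*} [Field K]

theorem sub_half_eq_neg_one_pow_mul [NeZero (2 : K)] {q : Fin 2 → K} (hq : ∑ B, q B = 1)
    (B : Fin 2) : q B - 1 / 2 = (-1) ^ (B : ℕ) * (q 0 - 1 / 2) := by
  rw [Fin.sum_univ_two] at hq
  fin_cases B
  · simp
  · have hone : q 1 = 1 - q 0 := eq_sub_of_add_eq' hq
    simp only [Fin.mk_one, hone, pow_one]
    field_simp
    ring

theorem success_sub_half_eq [NeZero (2 : K)] [Fintype M] {s : M → K} (hs : ∑ A, s A = 1)
    {q : M → Fin 2 → K} (hq : ∀ A, ∑ B, q A B = 1) (B : Fin 2) :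
    ∑ A, q A B * s A - 1 / 2 = (-1) ^ (B : ℕ) * ∑ A, s A * (q A 0 - 1 / 2) :=
  calc
    ∑ A, q A B * s A - 1 / 2 = ∑ A, s A * (q A B - 1 / 2) := by
      simp only [mul_sub, Finset.sum_sub_distrib, ← Finset.sum_mul, hs, one_mul, mul_comm]
    _ = (-1) ^ (B : ℕ) * ∑ A, s A * (q A 0 - 1 / 2) := by
      rw [Finset.mul_sum]
      exact Finset.sum_congr rfl fun A _ ↦ by
        rw [sub_half_eq_neg_one_pow_mul (hq A) B, mul_left_comm]

theorem classical_rac_bound_general {ι : Type*} [LinearOrder K] [IsStrictOrderedRing K]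
    [Fintype ι] [Fintype M] (hcard : Fintype.card M ≤ Fintype.card ι)
    (S : (ι → Fin 2) → M → K) (hS1 : ∀ a, ∑ A, S a A = 1)
    (R : M → ι → Fin 2 → K) (hR1 : ∀ A b, ∑ B, R A b B = 1) :
    ∃ (a : ι → Fin 2) (b : ι), ∑ A, R A b (a b) * S a A ≤ 1 / 2 := by
  have : Nonempty M := by
    by_contra hM
    rw [not_nonempty_iff] at hM
    simpa using hS1 0
  obtain ⟨a, ha⟩ :=
    exists_orthant_disjoint_affine_combinations hcard fun A b ↦ R A b 0 - 1 / 2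
  obtain ⟨b, hb⟩ := ha (S a) (hS1 a)
  rw [← success_sub_half_eq (hS1 a) (hR1 · b) (a b)] at hb
  exact ⟨a, b, sub_nonpos.mp hb⟩

end RandomAccessCode

/-- classical n → 1 random access code bound: for `n ≥ 2`, every
classical strategy with a binary message set — encodings `S(·|a)` on `Fin 2`
for bit strings `a : Fin n → Fin 2` and decodings `R(·|A,b)` on `Fin 2` — has
worst-case success probability at most `1/2`: there are `a, b` with
`∑ A, R(a b|A,b) * S(A|a) ≤ 1/2`. -/
theorem classical_rac_bound
    (n : ℕ) (hn : 2 ≤ n)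
    (S : (Fin n → Fin 2) → Fin 2 → ℝ)
    (hS : ∀ a A, 0 ≤ S a A) (hS1 : ∀ a, ∑ A, S a A = 1)
    (R : Fin 2 → Fin n → Fin 2 → ℝ)
    (hR : ∀ A b B, 0 ≤ R A b B) (hR1 : ∀ A b, ∑ B, R A b B = 1) :
    ∃ (a : Fin n → Fin 2) (b : Fin n),
      ∑ A, R A b (a b) * S a A ≤ 1 / 2 :=
  classical_rac_bound_general (by simpa using hn) S hS1 R hR1
end

section
/- (Corollary 4.) Let n ≥ 2 and consider the n → 1 random access code with binary message set M = {0,1}. For every detection-loophole strategy — a probability distribution p over a finite strategy set I, probability distributions P(·|a) on {0,1} for a ∈ {0,1}ⁿ, probability distributions P_i(·|A,b) on {0,1}, and efficiencies η_i(A,b) ∈ [0,1] with D(a,b) := Σ_{i,A} p_i η_i(A,b) P(A|a) > 0 for all a ∈ {0,1}ⁿ, b ∈ Fin n — there exist a ∈ {0,1}ⁿ and b ∈ Fin n such that P_DL(a_b|a,b) := (Σ_{i,A} p_i η_i(A,b) P_i(a_b|A,b) P(A|a)) / D(a,b) ≤ 1/2. That is, the detection loophole cannot raise the worst-case success probability of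 an n → 1 random access code above 1/2. -/
/-!
Worst-case success above `1/2` forces, for each index `b`, a linear functional `ℓ b` of the message
distribution `P(·|a)`, namely the bias of Bob's clicks towards `0`, to have sign `(-1) ^ a b` for
every bit string `a`. The functionals `ℓ b` together with the total mass `ℓ₀` are `n + 1` vectors
in a dual space of dimension `|M| ≤ n`, so there is a nontrivial relation
`c₀ • ℓ₀ + ∑ b, c b • ℓ b = 0`, and `c₀ ≥ 0` after a change of sign. Evaluated at `P(·|a)` for the
bit string `a` recording the signs of the `c b`, all its terms are nonnegative and one is positive.
-/

section SignPatterns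

open Module

theorem exists_neg_one_pow_mul_eq_abs {β R : Type*} [Ring R] [LinearOrder R] (c : β → R) :
    ∃ a : β → Fin 2, ∀ b, c b = |c b| * (-1) ^ (a b : ℕ) := by
  have hsign (t : R) : ∃ B : Fin 2, t = |t| * (-1) ^ (B : ℕ) := by
    rcases abs_choice t with h | h
    · exact ⟨0, by simp [h]⟩
    · exact ⟨1, by simp [h]⟩
  choose a ha using fun b => hsign (c b)
  exact ⟨a, ha⟩

variable {𝕜 V β : Type*} [Field 𝕜] [LinearOrder 𝕜] [IsStrictOrderedRing 𝕜]
  [AddCommGroup V] [Module 𝕜 V] [Module.Finite 𝕜 V] [Fintype β]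

theorem exists_nonneg_smul_add_sum_smul_eq_zero (hcard : finrank 𝕜 V ≤ Fintype.card β)
    (v₀ : V) (v : β → V) :
    ∃ (c₀ : 𝕜) (c : β → 𝕜), 0 ≤ c₀ ∧ c₀ • v₀ + ∑ b, c b • v b = 0 ∧ (c₀ ≠ 0 ∨ ∃ b, c b ≠ 0) := by
  have hdep : ¬ LinearIndependent 𝕜 fun o : Option β => o.elim v₀ v := fun hli => by
    have hle := hli.fintype_card_le_finrank
    rw [Fintype.card_option] at hle
    omega
  obtain ⟨g, hg, o, ho⟩ := Fintype.not_linearIndependent_iff.1 hdep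
  simp only [Fintype.sum_option, Option.elim_none, Option.elim_some] at hg
  have hne : g none ≠ 0 ∨ ∃ b, g (some b) ≠ 0 := by
    cases o with
    | none => exact .inl ho
    | some b => exact .inr ⟨b, ho⟩
  rcases le_total 0 (g none) with h₀ | h₀
  · exact ⟨g none, fun b => g (some b), h₀, hg, hne⟩
  · refine ⟨-g none, fun b => -g (some b), neg_nonneg.2 h₀, ?_, by simpa only [neg_ne_zero]⟩
    simp only [neg_smul, Finset.sum_neg_distrib, ← neg_add, hg, neg_zero]

theorem exists_neg_one_pow_mul_dual_apply_nonpos (hcard : finrank 𝕜 V ≤ Fintype.card β)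
    (ℓ₀ : Dual 𝕜 V) (ℓ : β → Dual 𝕜 V) (x : (β → Fin 2) → V) (hx : ∀ a, 0 < ℓ₀ (x a)) :
    ∃ (a : β → Fin 2) (b : β), (-1) ^ (a b : ℕ) * ℓ b (x a) ≤ 0 := by
  by_contra! hpos
  obtain ⟨c₀, c, hc₀, hrel, hne⟩ := exists_nonneg_smul_add_sum_smul_eq_zero
    (Subspace.dual_finrank_eq.trans_le hcard) ℓ₀ ℓ
  obtain ⟨a, ha⟩ := exists_neg_one_pow_mul_eq_abs c
  have hterm (b : β) : c b * ℓ b (x a) = |c b| * ((-1) ^ (a b : ℕ) * ℓ b (x a)) := by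
    rw [← mul_assoc, ← ha b]
  have hnonneg (b : β) : 0 ≤ c b * ℓ b (x a) :=
    hterm b ▸ mul_nonneg (abs_nonneg _) (hpos a b).le
  have heval : c₀ * ℓ₀ (x a) + ∑ b, c b * ℓ b (x a) = 0 := by
    simpa using LinearMap.congr_fun hrel (x a)
  refine heval.not_gt ?_
  rcases hne with h₀ | ⟨b, hb⟩
  · exact add_pos_of_pos_of_nonneg (mul_pos (hc₀.lt_of_ne' h₀) (hx a))
      (Finset.sum_nonneg fun b _ => hnonneg b)
  · refine add_pos_of_nonneg_of_pos (mul_nonneg hc₀ (hx a).le)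
      (Finset.sum_pos' (fun b _ => hnonneg b) ⟨b, Finset.mem_univ b, ?_⟩)
    exact hterm b ▸ mul_pos (abs_pos.2 hb) (hpos a b)

end SignPatterns

section ClickBias

theorem two_mul_sub_one_eq_neg_one_pow_mul {R : Type*} [CommRing R] {q : Fin 2 → R}
    (hq : ∑ B, q B = 1) (B : Fin 2) : 2 * q B - 1 = (-1) ^ (B : ℕ) * (q 0 - q 1) := by
  rw [Fin.sum_univ_two] at hq
  revert B
  refine Fin.forall_fin_two.2 ⟨?_, ?_⟩ <;>
    simp only [Fin.val_zero, Fin.val_one, pow_zero, pow_one] <;> linear_combination hq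

variable {R I M : Type*} [CommRing R] [Fintype I]

/-- The bias of Bob's post-selected decoding towards the output `0` on each message `A`, before
normalisation: `w i A` is the weight with which strategy `i` is used and clicks on `A`
(`p i * η i A b` for a fixed index `b`), and `q i A` is its output distribution. -/
def clickBias (w : I → M → R) (q : I → M → Fin 2 → R) (A : M) : R :=
  ∑ i, w i A * (q i A 0 - q i A 1)

theorem two_mul_sum_sub_sum_eq_clickBias_dotProduct [Fintype M] (w : I → M → R)
    {q : I → M → Fin 2 → R} (hq : ∀ i A, ∑ B, q i A B = 1) (x : M → R) (B : Fin 2) :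
    2 * ∑ i, ∑ A, w i A * q i A B * x A - ∑ i, ∑ A, w i A * x A =
      (-1) ^ (B : ℕ) * (clickBias w q ⬝ᵥ x) := by
  simp only [dotProduct, clickBias, Finset.sum_mul, Finset.mul_sum, ← Finset.sum_sub_distrib]
  rw [Finset.sum_comm]
  refine Finset.sum_congr rfl fun A _ => Finset.sum_congr rfl fun i _ => ?_
  linear_combination w i A * x A * two_mul_sub_one_eq_neg_one_pow_mul (hq i A) B

end ClickBias

theorem corollary4_general {𝕜 I M β : Type*} [Field 𝕜] [LinearOrder 𝕜] [IsStrictOrderedRing 𝕜]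
    [Fintype I] [Fintype M] [Fintype β] (hcard : Fintype.card M ≤ Fintype.card β)
    (p : I → 𝕜) (P : (β → Fin 2) → M → 𝕜) (hP1 : ∀ a, ∑ A, P a A = 1)
    (Pi : I → M → β → Fin 2 → 𝕜) (hPi1 : ∀ i A b, ∑ B, Pi i A b B = 1)
    (η : I → M → β → 𝕜) (hD : ∀ a b, 0 < ∑ i, ∑ A, p i * η i A b * P a A) :
    ∃ (a : β → Fin 2) (b : β),
      (∑ i, ∑ A, p i * η i A b * Pi i A b (a b) * P a A) /
        (∑ i, ∑ A, p i * η i A b * P a A) ≤ 1 / 2 := by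
  classical
  let bias (b : β) : M → 𝕜 := clickBias (fun i A => p i * η i A b) fun i A => Pi i A b
  obtain ⟨a, b, hab⟩ := exists_neg_one_pow_mul_dual_apply_nonpos
    ((Module.finrank_fintype_fun_eq_card 𝕜).trans_le hcard)
    (dotProductEquiv 𝕜 M 1) (fun b => dotProductEquiv 𝕜 M (bias b)) P
    (fun a => by simp [one_dotProduct, hP1 a])
  have hdiff := two_mul_sum_sub_sum_eq_clickBias_dotProduct (fun i A => p i * η i A b)
    (fun i A => hPi1 i A b) (P a) (a b)
  refine ⟨a, b, (div_le_iff₀ (hD a b)).2 ?_⟩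
  have hle := hdiff.trans_le hab
  linarith

/-- Corollary 4: for `n ≥ 2`, the detection loophole cannot raise
the worst-case success probability of an `n → 1` random access code (binary
message set `Fin 2`) above `1/2`: for every detection-loophole strategy —
distribution `p` on Bob's strategies `I`, encodings `P(·|a)` on `Fin 2`,
decodings `Pᵢ(·|A,b)` on `Fin 2` and efficiencies `ηᵢ(A,b) ∈ [0,1]` with
positive click probability — there exist `a : Fin n → Fin 2` and `b : Fin n`
with `P_DL(a b|a,b) ≤ 1/2`. -/
theorem corollary4
    (n : ℕ) (hn : 2 ≤ n)
    {I : Type*} [Fintype I] [Nonempty I]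
    (p : I → ℝ) (hp : ∀ i, 0 ≤ p i) (hp1 : ∑ i, p i = 1)
    (P : (Fin n → Fin 2) → Fin 2 → ℝ)
    (hP : ∀ a A, 0 ≤ P a A) (hP1 : ∀ a, ∑ A, P a A = 1)
    (Pi : I → Fin 2 → Fin n → Fin 2 → ℝ)
    (hPi : ∀ i A b B, 0 ≤ Pi i A b B) (hPi1 : ∀ i A b, ∑ B, Pi i A b B = 1)
    (η : I → Fin 2 → Fin n → ℝ) (hη : ∀ i A b, 0 ≤ η i A b ∧ η i A b ≤ 1)
    (hD : ∀ (a : Fin n → Fin 2) (b : Fin n),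
      0 < ∑ i, ∑ A, p i * η i A b * P a A) :
    ∃ (a : Fin n → Fin 2) (b : Fin n),
      (∑ i, ∑ A, p i * η i A b * Pi i A b (a b) * P a A) /
        (∑ i, ∑ A, p i * η i A b * P a A) ≤ 1 / 2 :=
  corollary4_general (by simpa using hn) p P hP1 Pi hPi1 η hD
end

section
/- (Nayak-type bound for classical random access codes, classical case of the bound used for the 3 → log 6 example.) Let n ≥ 1, let M be a finite message set of cardinality D ≥ 2, and let 1/2 ≤ p ≤ 1. Suppose a classical strategy for the n-bit random access code — probability distributions S(·|a) on M for a ∈ {0,1}ⁿ and R(·|A,b) on {0,1} for A ∈ M, b ∈ Fin n — satisfies Σ_{A∈M} R(a_b|A,b) S(A|a) ≥ p for every a ∈ {0,1}ⁿ and b ∈ Fin n. Then n · (1 − h(p)) ≤ log₂ D, where h(p) = −p log₂ p − (1−p) log₂(1−p) is the binary Shannon entropy (with h(1) = 0). -/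
/-- The binary Shannon entropy `h(p) = -p log₂ p - (1-p) log₂ (1-p)`
(with the conventions `h 0 = h 1 = 0`, automatic since `Real.logb 2 0 = 0`). -/
noncomputable def binaryEntropy (p : ℝ) : ℝ :=
  -p * Real.logb 2 p - (1 - p) * Real.logb 2 (1 - p)

/-!
Let the alphabet have `q` letters and the words length `n`, and put `x = p`,
`y = (1 - p) / (q - 1)`. If on message `A` the decoder is expected to guess `s A a` letters of the
word `a` correctly, then `∑ a, x ^ s A a * y ^ (n - s A a) ≤ 1`: by weighted AM-GM each summand is
at most the probability of `a` under a noisy version of the decoder. Summing over `A` bounds the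
average of `x ^ s * y ^ (n - s)` over random words and their messages by `|M| / q ^ n`. A second
use of AM-GM, together with `y ≤ x`, bounds the same average below by
`(x ^ p * y ^ (1 - p)) ^ n`, whose base is the exponential of minus the entropy. Working with
powers, where `0 ^ 0 = 1`, rather than logarithms covers `p = 1` as well.
-/

open Finset
open scoped BigOperators

section WeightedPowers

variable {ι : Type*} [Fintype ι] {x y : ℝ}

lemma rpow_mul_rpow_sub_le_of_le (hy : 0 ≤ y) (hyx : y ≤ x) {s t c : ℝ} (hs : 0 ≤ s)
    (hst : s ≤ t) (htc : t ≤ c) : x ^ s * y ^ (c - s) ≤ x ^ t * y ^ (c - t) := by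
  have hx : 0 ≤ x := hy.trans hyx
  have hts : 0 ≤ t - s := sub_nonneg.2 hst
  calc x ^ s * y ^ (c - s) = x ^ s * (y ^ (t - s) * y ^ (c - t)) := by
        rw [← Real.rpow_add_of_nonneg hy hts (sub_nonneg.2 htc)]; ring_nf
    _ ≤ x ^ s * (x ^ (t - s) * y ^ (c - t)) := by gcongr
    _ = x ^ t * y ^ (c - t) := by
        rw [← mul_assoc, ← Real.rpow_add_of_nonneg hx hs hts]; ring_nf

lemma rpow_mul_rpow_le_sum_of_mem_stdSimplex (hx : 0 ≤ x) (hy : 0 ≤ y) {w s t : ι → ℝ}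
    (hw : w ∈ stdSimplex ℝ ι) (hs : ∀ i, 0 ≤ s i) (ht : ∀ i, 0 ≤ t i) :
    x ^ (∑ i, w i * s i) * y ^ (∑ i, w i * t i) ≤ ∑ i, w i * (x ^ s i * y ^ t i) := by
  calc x ^ (∑ i, w i * s i) * y ^ (∑ i, w i * t i)
      = ∏ i, (x ^ s i * y ^ t i) ^ w i := by
        rw [Real.rpow_sum_of_nonneg hx fun i _ ↦ mul_nonneg (hw.1 i) (hs i),
          Real.rpow_sum_of_nonneg hy fun i _ ↦ mul_nonneg (hw.1 i) (ht i), ← prod_mul_distrib]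
        refine prod_congr rfl fun i _ ↦ ?_
        rw [Real.mul_rpow (by positivity) (by positivity), ← Real.rpow_mul hx,
          ← Real.rpow_mul hy, mul_comm (w i), mul_comm (w i)]
    _ ≤ ∑ i, w i * (x ^ s i * y ^ t i) :=
        Real.geom_mean_le_arith_mean_weighted _ _ _ (fun i _ ↦ hw.1 i) hw.2
          fun i _ ↦ by positivity

lemma rpow_sum_mul_rpow_le_prod (hx : 0 ≤ x) (hy : 0 ≤ y) {r : ι → ℝ}
    (hr : ∀ i, r i ∈ Set.Icc 0 1) :
    x ^ (∑ i, r i) * y ^ (Fintype.card ι - ∑ i, r i) ≤ ∏ i, (r i * x + (1 - r i) * y) := by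
  have hsum : Fintype.card ι - ∑ i, r i = ∑ i, (1 - r i) := by simp
  have hcompl (i : ι) : 0 ≤ 1 - r i := sub_nonneg.2 (hr i).2
  rw [hsum, Real.rpow_sum_of_nonneg hx fun i _ ↦ (hr i).1,
    Real.rpow_sum_of_nonneg hy fun i _ ↦ hcompl i, ← prod_mul_distrib]
  exact prod_le_prod (fun i _ ↦ by positivity) fun i _ ↦
    Real.geom_mean_le_arith_mean2_weighted (hr i).1 (hcompl i) hx hy (add_sub_cancel _ _)

end WeightedPowers

section RandomAccessCode

variable {ι α M : Type*} [Fintype ι] [Fintype α] [Fintype M]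

/-- The expected number of letters of `a` that a decoder guesses correctly when it outputs the
letter `B` at position `b` with probability `r b B`. -/
def expectedHits (r : ι → α → ℝ) (a : ι → α) : ℝ :=
  ∑ b, r b (a b)

/-- The success probability of the random access code with encoder `S` and decoder `R`, averaged
over uniformly random words `a` and positions `b`. -/
noncomputable def averageSuccess [DecidableEq ι] (S : (ι → α) → M → ℝ) (R : M → ι → α → ℝ) : ℝ :=
  𝔼 a, 𝔼 b, ∑ A, R A b (a b) * S a A

lemma expectedHits_mem_Icc {r : ι → α → ℝ} (hr : ∀ b, r b ∈ stdSimplex ℝ α) (a : ι → α) :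
    expectedHits r a ∈ Set.Icc 0 (Fintype.card ι : ℝ) := by
  have hIcc (b : ι) := mem_Icc_of_mem_stdSimplex (hr b) (a b)
  exact ⟨sum_nonneg fun b _ ↦ (hIcc b).1,
    by simpa [expectedHits] using sum_le_card_nsmul univ _ 1 fun b _ ↦ (hIcc b).2⟩

variable [DecidableEq ι]

/-- Pass the guess drawn from `r b` through a symmetric channel which keeps a letter with
probability `x` and turns it into any given other letter with probability `y`. The outcome is `B`
with probability `r b B * x + (1 - r b B) * y`, which dominates `x ^ r b B * y ^ (1 - r b B)`. -/
lemma sum_rpow_expectedHits_le_one {x y : ℝ} (hx : 0 ≤ x) (hy : 0 ≤ y)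
    (hxy : x + (Fintype.card α - 1) * y = 1) {r : ι → α → ℝ}
    (hr : ∀ b, r b ∈ stdSimplex ℝ α) :
    ∑ a, x ^ expectedHits r a * y ^ (Fintype.card ι - expectedHits r a) ≤ 1 := by
  have hmass (b : ι) : ∑ B, (r b B * x + (1 - r b B) * y) = 1 := by
    rw [sum_add_distrib, ← sum_mul, ← sum_mul, sum_sub_distrib, (hr b).2]
    simpa using hxy
  calc ∑ a, x ^ expectedHits r a * y ^ (Fintype.card ι - expectedHits r a)
      ≤ ∑ a : ι → α, ∏ b, (r b (a b) * x + (1 - r b (a b)) * y) :=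
        sum_le_sum fun a _ ↦ rpow_sum_mul_rpow_le_prod hx hy fun b ↦
          mem_Icc_of_mem_stdSimplex (hr b) (a b)
    _ = ∏ b, ∑ B, (r b B * x + (1 - r b B) * y) :=
        (Fintype.prod_sum fun b B ↦ r b B * x + (1 - r b B) * y).symm
    _ = 1 := prod_eq_one fun b _ ↦ hmass b

lemma le_averageSuccess [Nonempty ι] [Nonempty α] {S : (ι → α) → M → ℝ} {R : M → ι → α → ℝ}
    {p : ℝ} (hsucc : ∀ a b, p ≤ ∑ A, R A b (a b) * S a A) : p ≤ averageSuccess S R :=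
  le_expect univ_nonempty fun a _ ↦ le_expect univ_nonempty fun b _ ↦ hsucc a b

/-- The right side averages over the joint law of a uniformly random word and its message. -/
lemma card_mul_averageSuccess (S : (ι → α) → M → ℝ) (R : M → ι → α → ℝ) :
    Fintype.card ι * averageSuccess S R =
      ∑ z : (ι → α) × M, S z.1 z.2 / Fintype.card (ι → α) * expectedHits (R z.2) z.1 := by
  rw [averageSuccess, mul_expect, Fintype.expect_eq_sum_div_card, sum_div, Fintype.sum_prod_type]
  refine sum_congr rfl fun a _ ↦ ?_
  rw [Fintype.card_mul_expect, sum_comm, sum_div]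
  refine sum_congr rfl fun A _ ↦ ?_
  rw [← sum_mul, expectedHits]
  ring

lemma div_card_mem_stdSimplex [Nonempty α] {S : (ι → α) → M → ℝ}
    (hS : ∀ a, S a ∈ stdSimplex ℝ M) :
    (fun z : (ι → α) × M ↦ S z.1 z.2 / Fintype.card (ι → α)) ∈ stdSimplex ℝ ((ι → α) × M) := by
  refine ⟨fun z ↦ div_nonneg ((hS z.1).1 z.2) (Nat.cast_nonneg _), ?_⟩
  simp only [← sum_div, Fintype.sum_prod_type, (hS _).2, sum_const, card_univ, nsmul_one]
  exact div_self (by positivity)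

lemma sum_mul_rpow_expectedHits_le_card {x y : ℝ} (hx : 0 ≤ x) (hy : 0 ≤ y)
    (hxy : x + (Fintype.card α - 1) * y = 1) {S : (ι → α) → M → ℝ}
    (hS : ∀ a, S a ∈ stdSimplex ℝ M) {R : M → ι → α → ℝ}
    (hR : ∀ A b, R A b ∈ stdSimplex ℝ α) :
    ∑ z : (ι → α) × M, S z.1 z.2 * (x ^ expectedHits (R z.2) z.1 *
      y ^ (Fintype.card ι - expectedHits (R z.2) z.1)) ≤ Fintype.card M := by
  rw [Fintype.sum_prod_type_right]
  calc _ ≤ ∑ A : M, ∑ a, x ^ expectedHits (R A) a * y ^ (Fintype.card ι - expectedHits (R A) a) :=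
        sum_le_sum fun A _ ↦ sum_le_sum fun a _ ↦
          mul_le_of_le_one_left (by positivity) (mem_Icc_of_mem_stdSimplex (hS a) A).2
    _ ≤ ∑ _A : M, 1 := sum_le_sum fun A _ ↦ sum_rpow_expectedHits_le_one hx hy hxy (hR A)
    _ = Fintype.card M := by simp

lemma card_mul_averageSuccess_le_card [Nonempty α] {S : (ι → α) → M → ℝ}
    (hS : ∀ a, S a ∈ stdSimplex ℝ M) {R : M → ι → α → ℝ}
    (hR : ∀ A b, R A b ∈ stdSimplex ℝ α) :
    Fintype.card ι * averageSuccess S R ≤ Fintype.card ι := by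
  have hw := div_card_mem_stdSimplex hS
  rw [card_mul_averageSuccess]
  calc _ ≤ ∑ z : (ι → α) × M, S z.1 z.2 / Fintype.card (ι → α) * Fintype.card ι :=
        sum_le_sum fun z _ ↦
          mul_le_mul_of_nonneg_left (expectedHits_mem_Icc (hR z.2) z.1).2 (hw.1 z)
    _ = Fintype.card ι := by rw [← sum_mul, hw.2, one_mul]

lemma rpow_card_mul_averageSuccess_le_sum [Nonempty α] {x y : ℝ} (hx : 0 ≤ x) (hy : 0 ≤ y)
    {S : (ι → α) → M → ℝ} (hS : ∀ a, S a ∈ stdSimplex ℝ M) {R : M → ι → α → ℝ}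
    (hR : ∀ A b, R A b ∈ stdSimplex ℝ α) :
    x ^ (Fintype.card ι * averageSuccess S R) *
        y ^ (Fintype.card ι - Fintype.card ι * averageSuccess S R) ≤
      ∑ z : (ι → α) × M, S z.1 z.2 / Fintype.card (ι → α) * (x ^ expectedHits (R z.2) z.1 *
        y ^ (Fintype.card ι - expectedHits (R z.2) z.1)) := by
  have hw := div_card_mem_stdSimplex hS
  have hmisses : Fintype.card ι - Fintype.card ι * averageSuccess S R =
      ∑ z : (ι → α) × M, S z.1 z.2 / Fintype.card (ι → α) *
        (Fintype.card ι - expectedHits (R z.2) z.1) := by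
    simp only [mul_sub, sum_sub_distrib, ← sum_mul, hw.2, one_mul, card_mul_averageSuccess]
  rw [hmisses, card_mul_averageSuccess]
  exact rpow_mul_rpow_le_sum_of_mem_stdSimplex hx hy hw
    (fun z ↦ (expectedHits_mem_Icc (hR z.2) z.1).1)
    fun z ↦ sub_nonneg.2 (expectedHits_mem_Icc (hR z.2) z.1).2

lemma pow_card_le_card_of_le_averageSuccess [Nonempty α] {p x y : ℝ} (hp : 0 ≤ p) (hy : 0 ≤ y)
    (hyx : y ≤ x) (hxy : x + (Fintype.card α - 1) * y = 1) {S : (ι → α) → M → ℝ}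
    (hS : ∀ a, S a ∈ stdSimplex ℝ M) {R : M → ι → α → ℝ}
    (hR : ∀ A b, R A b ∈ stdSimplex ℝ α) (hsucc : p ≤ averageSuccess S R) :
    (Fintype.card α * (x ^ p * y ^ (1 - p))) ^ Fintype.card ι ≤ Fintype.card M := by
  have hx : 0 ≤ x := hy.trans hyx
  set n := (Fintype.card ι : ℝ) with hn
  set N := (Fintype.card (ι → α) : ℝ) with hN
  have hN_eq : N = (Fintype.card α : ℝ) ^ Fintype.card ι := by simp [hN]
  have hN_pos : 0 < N := by positivity
  calc (Fintype.card α * (x ^ p * y ^ (1 - p))) ^ Fintype.card ι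
      = N * (x ^ (n * p) * y ^ (n - n * p)) := by
        rw [mul_pow, mul_pow, ← Real.rpow_mul_natCast hx, ← Real.rpow_mul_natCast hy, hN_eq,
          ← hn, mul_comm p, mul_comm (1 - p), mul_one_sub]
    _ ≤ N * (x ^ (n * averageSuccess S R) * y ^ (n - n * averageSuccess S R)) := by
        gcongr N * ?_
        exact rpow_mul_rpow_sub_le_of_le hy hyx (by positivity) (by gcongr)
          (card_mul_averageSuccess_le_card hS hR)
    _ ≤ N * ∑ z : (ι → α) × M, S z.1 z.2 / N * (x ^ expectedHits (R z.2) z.1 *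
          y ^ (n - expectedHits (R z.2) z.1)) := by
        gcongr
        exact rpow_card_mul_averageSuccess_le_sum hx hy hS hR
    _ = ∑ z : (ι → α) × M, S z.1 z.2 * (x ^ expectedHits (R z.2) z.1 *
          y ^ (n - expectedHits (R z.2) z.1)) := by
        rw [mul_sum]
        exact sum_congr rfl fun z _ ↦ by rw [← mul_assoc, mul_div_cancel₀ _ hN_pos.ne']
    _ ≤ Fintype.card M := sum_mul_rpow_expectedHits_le_card hx hy hxy hS hR

end RandomAccessCode

section Entropy

/-- The argument of `Real.qaryEntropy` is the error probability, here `1 - p`. -/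
lemma rpow_mul_rpow_eq_exp_neg_qaryEntropy {q : ℕ} (hq : 1 < q) {p : ℝ} (hp : 0 < p)
    (hp1 : p ≤ 1) :
    p ^ p * ((1 - p) / (q - 1)) ^ (1 - p) = Real.exp (-Real.qaryEntropy q (1 - p)) := by
  have hq1 : (0 : ℝ) < q - 1 := sub_pos.2 (mod_cast hq)
  obtain rfl | hp1 := hp1.eq_or_lt
  · simp
  have hp1' : 0 < 1 - p := sub_pos.2 hp1
  rw [Real.rpow_def_of_pos hp, Real.rpow_def_of_pos (div_pos hp1' hq1),
    Real.log_div hp1'.ne' hq1.ne', ← Real.exp_add, Real.qaryEntropy, Real.binEntropy_one_sub,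
    Real.binEntropy_eq_negMulLog_add_negMulLog_one_sub]
  simp only [Real.negMulLog]
  push_cast
  ring_nf

lemma binaryEntropy_eq_qaryEntropy_div_log (p : ℝ) :
    binaryEntropy p = Real.qaryEntropy 2 (1 - p) / Real.log 2 := by
  rw [Real.qaryEntropy_two, Real.binEntropy_one_sub,
    Real.binEntropy_eq_negMulLog_add_negMulLog_one_sub]
  simp only [binaryEntropy, Real.negMulLog, Real.logb]
  ring

end Entropy

theorem nayak_bound_general {ι α M : Type*} [Fintype ι] [DecidableEq ι] [Fintype α] [Nontrivial α]
    [Fintype M] {p : ℝ} (hp : (Fintype.card α : ℝ)⁻¹ ≤ p) (hp1 : p ≤ 1)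
    {S : (ι → α) → M → ℝ} (hS : ∀ a, S a ∈ stdSimplex ℝ M) {R : M → ι → α → ℝ}
    (hR : ∀ A b, R A b ∈ stdSimplex ℝ α) (hsucc : p ≤ averageSuccess S R) :
    Fintype.card ι *
        (1 - Real.qaryEntropy (Fintype.card α) (1 - p) / Real.log (Fintype.card α)) ≤
      Real.logb (Fintype.card α) (Fintype.card M) := by
  set q := Fintype.card α with hq
  have hq1 : 1 < q := Fintype.one_lt_card
  have hqR : (1 : ℝ) < q := mod_cast hq1
  have hq0 : (0 : ℝ) < q := one_pos.trans hqR
  have hp0 : 0 < p := (inv_pos.2 hq0).trans_le hp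
  have hq_sub : (0 : ℝ) < q - 1 := sub_pos.2 hqR
  have hyx : (1 - p) / (q - 1) ≤ p := by
    rw [div_le_iff₀ hq_sub]
    linarith [(inv_le_iff_one_le_mul₀ hq0).1 hp]
  have hpow := pow_card_le_card_of_le_averageSuccess hp0.le
    (div_nonneg (sub_nonneg.2 hp1) hq_sub.le) hyx (by rw [← hq]; field_simp; ring) hS hR hsucc
  rw [← hq, rpow_mul_rpow_eq_exp_neg_qaryEntropy hq1 hp0 hp1] at hpow
  calc Fintype.card ι * (1 - Real.qaryEntropy q (1 - p) / Real.log q)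
      = Real.logb q ((q * Real.exp (-Real.qaryEntropy q (1 - p))) ^ Fintype.card ι) := by
        rw [Real.logb_pow, Real.logb_mul hq0.ne' (Real.exp_pos _).ne',
          Real.logb_self_eq_one hqR, Real.logb, Real.log_exp]
        ring
    _ ≤ Real.logb q (Fintype.card M) := Real.logb_le_logb_of_le hqR (by positivity) hpow

/-- Nayak-type bound for classical random access codes: if a
classical strategy for the `n`-bit random access code with message set `M` of
cardinality `D ≥ 2` succeeds with probability at least `p` (`1/2 ≤ p ≤ 1`) on
every input pair `(a, b)`, then `n * (1 - h(p)) ≤ log₂ D`. -/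
theorem nayak_bound
    (n : ℕ) (hn : 1 ≤ n)
    {M : Type*} [Fintype M] (D : ℕ) (hD : Fintype.card M = D) (hD2 : 2 ≤ D)
    (p : ℝ) (hp : 1 / 2 ≤ p) (hp1 : p ≤ 1)
    (S : (Fin n → Fin 2) → M → ℝ)
    (hS : ∀ a A, 0 ≤ S a A) (hS1 : ∀ a, ∑ A, S a A = 1)
    (R : M → Fin n → Fin 2 → ℝ)
    (hR : ∀ A b B, 0 ≤ R A b B) (hR1 : ∀ A b, ∑ B, R A b B = 1)
    (hsucc : ∀ (a : Fin n → Fin 2) (b : Fin n),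
      p ≤ ∑ A, R A b (a b) * S a A) :
    (n : ℝ) * (1 - binaryEntropy p) ≤ Real.logb 2 D := by
  have : Nonempty (Fin n) := Fin.pos_iff_nonempty.1 hn
  simpa [hD, binaryEntropy_eq_qaryEntropy_div_log] using
    nayak_bound_general (by simpa using hp) hp1 (fun a ↦ ⟨hS a, hS1 a⟩)
      (fun A b ↦ ⟨hR A b, hR1 A b⟩) (le_averageSuccess hsucc)
end

section
/- (Worst-case bound for the classical 3 → log 6 random access code.) For every classical strategy for the 3-bit random access code with a message set M of cardinality 6 — probability distributions S(·|a) on M for each a ∈ {0,1}³ and probability distributions R(·|A,b) on {0,1} for each A ∈ M, b ∈ Fin 3 — there exist a ∈ {0,1}³ and b ∈ Fin 3 such that Σ_{A∈M} R(a_b|A,b) S(A|a) < 0.981. That is, the worst-case success probability P^{wc} of the classical 3 → log 6 random access code satisfies P^{wc} < 0.981. -/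
/-!
Fewer messages than strings: by averaging, Bob's success probabilities on a string `a`, summed over
the positions `b`, are at most `∑ b, R A b (a b)` for some single message `A`, and by the pigeonhole
principle one `A` serves two distinct strings `a` and `a'`. Wherever `a` and `a'` differ, the
probabilities of decoding `A` to `a b` and to `a' b` add up to at most `1`, so the two sums together
fall short of the maximum `2 n` by at least `hammingDist a a' ≥ 1`. Hence one of the `2 n` success
probabilities involved is at most `1 - 1 / (2 n)`, which is `5 / 6` for `n = 3`.
-/

section RandomAccessCode

variable {𝕜 M ι β : Type*} [Field 𝕜] [LinearOrder 𝕜] [IsStrictOrderedRing 𝕜]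
  [Fintype M] [Fintype ι]

theorem exists_sum_mul_le_of_mem_stdSimplex {w : M → 𝕜} (hw : w ∈ stdSimplex 𝕜 M) (g : M → 𝕜) :
    ∃ A, ∑ A', g A' * w A' ≤ g A := by
  have : Nonempty M := by
    by_contra! hM
    simp [stdSimplex_of_isEmpty_index] at hw
  obtain ⟨A, hA⟩ := Finite.exists_max g
  refine ⟨A, ?_⟩
  calc ∑ A', g A' * w A' ≤ ∑ A', g A * w A' :=
        Finset.sum_le_sum fun A' _ ↦ mul_le_mul_of_nonneg_right (hA A') (hw.1 A')
    _ = g A := by rw [← Finset.mul_sum, hw.2, mul_one]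

theorem sum_add_sum_le_two_mul_card_sub_hammingDist [Fintype β] [DecidableEq β]
    {p : ι → β → 𝕜} (hp : ∀ b, p b ∈ stdSimplex 𝕜 β) (a a' : ι → β) :
    ∑ b, p b (a b) + ∑ b, p b (a' b) ≤ 2 * Fintype.card ι - hammingDist a a' := by
  have hle_one (b : ι) (B : β) : p b B ≤ 1 := (mem_Icc_of_mem_stdSimplex (hp b) B).2
  have hpair (b : ι) : p b (a b) + p b (a' b) ≤ 2 - if a b ≠ a' b then 1 else 0 := by
    split_ifs with hne
    · have : p b (a b) + p b (a' b) ≤ ∑ B, p b B :=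
        Finset.add_le_sum (fun B _ ↦ (hp b).1 B) (Finset.mem_univ _) (Finset.mem_univ _) hne
      linarith [(hp b).2]
    · linarith [hle_one b (a b), hle_one b (a' b)]
  calc ∑ b, p b (a b) + ∑ b, p b (a' b) = ∑ b, (p b (a b) + p b (a' b)) :=
        Finset.sum_add_distrib.symm
    _ ≤ ∑ b, (2 - if a b ≠ a' b then 1 else 0) := Finset.sum_le_sum fun b _ ↦ hpair b
    _ = 2 * Fintype.card ι - hammingDist a a' := by
        simp only [Finset.sum_sub_distrib, Finset.sum_const, Finset.card_univ, nsmul_eq_mul,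
          Finset.sum_boole, hammingDist, mul_comm]

/-- The probability that Bob recovers the letter `a b` when Alice, holding the string `a`, sends the
message `A` with probability `S a A`, and Bob, asked for position `b`, answers `B` on receiving `A`
with probability `R A b B`. -/
def racSuccessProb (S : (ι → β) → M → 𝕜) (R : M → ι → β → 𝕜) (a : ι → β) (b : ι) : 𝕜 :=
  ∑ A, R A b (a b) * S a A

theorem exists_sum_racSuccessProb_le {S : (ι → β) → M → 𝕜} {a : ι → β}
    (hS : S a ∈ stdSimplex 𝕜 M) (R : M → ι → β → 𝕜) :
    ∃ A, ∑ b, racSuccessProb S R a b ≤ ∑ b, R A b (a b) := by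
  obtain ⟨A, hA⟩ := exists_sum_mul_le_of_mem_stdSimplex hS fun A ↦ ∑ b, R A b (a b)
  refine ⟨A, hA.trans_eq' ?_⟩
  simp only [racSuccessProb, Finset.sum_mul]
  exact Finset.sum_comm

theorem exists_ne_sum_racSuccessProb_add_le [Fintype β]
    (hcard : Fintype.card M < Fintype.card β ^ Fintype.card ι)
    {S : (ι → β) → M → 𝕜} (hS : ∀ a, S a ∈ stdSimplex 𝕜 M)
    {R : M → ι → β → 𝕜} (hR : ∀ A b, R A b ∈ stdSimplex 𝕜 β) :
    ∃ a a' : ι → β, a ≠ a' ∧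
      ∑ b, racSuccessProb S R a b + ∑ b, racSuccessProb S R a' b ≤ 2 * Fintype.card ι - 1 := by
  classical
  choose best hbest using fun a ↦ exists_sum_racSuccessProb_le (hS a) R
  obtain ⟨a, a', hne, hbest_eq⟩ :=
    Fintype.exists_ne_map_eq_of_card_lt best (by rwa [Fintype.card_fun])
  have hdist : (1 : 𝕜) ≤ hammingDist a a' := by exact_mod_cast hammingDist_pos.2 hne
  refine ⟨a, a', hne, ?_⟩
  calc ∑ b, racSuccessProb S R a b + ∑ b, racSuccessProb S R a' b
      ≤ ∑ b, R (best a) b (a b) + ∑ b, R (best a) b (a' b) :=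
        add_le_add (hbest a) (hbest_eq ▸ hbest a')
    _ ≤ 2 * Fintype.card ι - hammingDist a a' :=
        sum_add_sum_le_two_mul_card_sub_hammingDist (hR (best a)) a a'
    _ ≤ 2 * Fintype.card ι - 1 := sub_le_sub_left hdist _

theorem rac_3_log6_bound_general [Fintype β]
    (hcard : Fintype.card M < Fintype.card β ^ Fintype.card ι)
    {S : (ι → β) → M → 𝕜} (hS : ∀ a, S a ∈ stdSimplex 𝕜 M)
    {R : M → ι → β → 𝕜} (hR : ∀ A b, R A b ∈ stdSimplex 𝕜 β) :
    ∃ a b, racSuccessProb S R a b ≤ 1 - 1 / (2 * Fintype.card ι) := by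
  obtain ⟨a, a', hne, hsum⟩ := exists_ne_sum_racSuccessProb_add_le hcard hS hR
  have : Nonempty ι := (Function.ne_iff.1 hne).nonempty
  have hbound : ∑ _b : ι, (1 - 1 / (2 * Fintype.card ι) : 𝕜) = Fintype.card ι - 1 / 2 := by
    rw [Finset.sum_const, Finset.card_univ, nsmul_eq_mul]
    field_simp
  by_contra! hlt
  have hsum_lt (c : ι → β) : Fintype.card ι - 1 / 2 < ∑ b, racSuccessProb S R c b :=
    hbound ▸ Finset.sum_lt_sum_of_nonempty Finset.univ_nonempty fun b _ ↦ hlt c b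
  linarith [hsum_lt a, hsum_lt a']

end RandomAccessCode

/-- worst-case bound for the classical 3 → log 6 random access
code: every classical strategy for the 3-bit random access code with a message
set of cardinality 6 has worst-case success probability strictly below 0.981:
there exist `a : Fin 3 → Fin 2` and `b : Fin 3` with
`∑ A, R(a b|A,b) * S(A|a) < 0.981`. -/
theorem rac_3_log6_bound
    {M : Type*} [Fintype M] (hM : Fintype.card M = 6)
    (S : (Fin 3 → Fin 2) → M → ℝ)
    (hS : ∀ a A, 0 ≤ S a A) (hS1 : ∀ a, ∑ A, S a A = 1)
    (R : M → Fin 3 → Fin 2 → ℝ)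
    (hR : ∀ A b B, 0 ≤ R A b B) (hR1 : ∀ A b, ∑ B, R A b B = 1) :
    ∃ (a : Fin 3 → Fin 2) (b : Fin 3),
      ∑ A, R A b (a b) * S a A < 0.981 := by
  obtain ⟨a, b, h⟩ := rac_3_log6_bound_general (by simp [hM])
    (fun a ↦ ⟨hS a, hS1 a⟩) (fun A b ↦ ⟨hR A b, hR1 A b⟩)
  exact ⟨a, b, h.trans_lt (by norm_num)⟩
end

section
/- (Detection-loophole attack achieving perfect worst-case success for the 3 → log 6 random access code.) Consider the message set M = {0,1} × Fin 3 (a bit A₀ and a trit A₁, so |M| = 6) and define: Alice's encoding S((A₀,A₁)|a) := 1/3 if A₀ = a_{A₁} and 0 otherwise, for a ∈ {0,1}³; Bob's detection efficiency η((A₀,A₁), b) := 1 if b = A₁ and 0 otherwise; and Bob's decoding Q(B|(A₀,A₁), b) := 1 if B = A₀ and 0 otherwise. Then: (i) S(·|a) is a probability distribution on M for every a, and Q(·|(A₀,A₁),b) is a probability distribution on {0,1}; (ii) the click probability D(a,b) := Σ_{A∈M} η(A,b) S(A|a) equals 1/3 > 0 for every a ∈ {0,1}³, b ∈ Fin 3;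 and (iii) the post-selected statistics achieve perfect success: P_DL(a_b|a,b) := (Σ_{A∈M} η(A,b) Q(a_b|A,b) S(A|a)) / D(a,b) = 1 for every a ∈ {0,1}³ and b ∈ Fin 3. Hence there exists a detection-loophole strategy for the 3 → log 6 random access code with worst-case success probability P_DL^{wc} = 1. -/
/-! Alice guesses Bob's input `y` and sends the answer to her guess together with the guess itself;
Bob copies the answer and suppresses every round in which the guess is wrong. The click probability
on input `b` is then the probability `p b` of guessing `b`, and in every round that survives
post-selection the transmitted answer is `f a b`. -/

namespace DetectionLoophole

section PostSelection

variable {X Y Z M 𝕜 : Type*} [Fintype M]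

/-- The click probability `D(a,b)` of the detection efficiencies `η` on the encoding `S`. -/
def clickProb [Semiring 𝕜] (η : M → Y → 𝕜) (S : X → M → 𝕜) (a : X) (b : Y) : 𝕜 :=
  ∑ A, η A b * S a A

/-- The post-selected statistics `P_DL(B|a,b)`, with the junk value `0` if Bob never clicks on
input `(a, b)`. -/
def postSelected [DivisionSemiring 𝕜] (η : M → Y → 𝕜) (Q : M → Y → Z → 𝕜) (S : X → M → 𝕜)
    (B : Z) (a : X) (b : Y) : 𝕜 :=
  (∑ A, η A b * Q A b B * S a A) / clickProb η S a b

end PostSelection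

section GuessingStrategy

variable {X Y Z 𝕜 : Type*}

/-- Bob's detection efficiency in the guessing attack: he clicks exactly when the guess carried by
the message is his input. -/
def guessEfficiency [Zero 𝕜] [One 𝕜] [DecidableEq Y] (A : Z × Y) (b : Y) : 𝕜 :=
  if b = A.2 then 1 else 0

theorem sum_guessEfficiency_mul [NonAssocSemiring 𝕜] [DecidableEq Y] [Fintype Y] [Fintype Z]
    (w : Z × Y → 𝕜) (b : Y) :
    ∑ A, guessEfficiency A b * w A = ∑ z, w (z, b) := by
  simp [guessEfficiency, Fintype.sum_prod_type]

variable [DecidableEq Z]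

/-- Alice's encoding in the guessing attack on the target function `f`: a guess `y` of Bob's input
is drawn with weight `p y`, and the message is the pair `(f a y, y)`. -/
def guessEncoding [Zero 𝕜] (f : X → Y → Z) (p : Y → 𝕜) (a : X) (A : Z × Y) : 𝕜 :=
  if A.1 = f a A.2 then p A.2 else 0

/-- Bob's decoding in the guessing attack: he outputs the answer carried by the message. -/
def copyDecoding [Zero 𝕜] [One 𝕜] (A : Z × Y) (_ : Y) (B : Z) : 𝕜 :=
  if B = A.1 then 1 else 0

theorem guessEncoding_mem_stdSimplex [Semiring 𝕜] [PartialOrder 𝕜] [Fintype Y] [Fintype Z]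
    (f : X → Y → Z) {p : Y → 𝕜} (hp : p ∈ stdSimplex 𝕜 Y) (a : X) :
    guessEncoding f p a ∈ stdSimplex 𝕜 (Z × Y) := by
  refine ⟨fun A => ?_, ?_⟩
  · exact ite_nonneg (hp.1 A.2) le_rfl
  · simpa [guessEncoding, Fintype.sum_prod_type_right] using hp.2

theorem copyDecoding_mem_stdSimplex [Semiring 𝕜] [PartialOrder 𝕜] [ZeroLEOneClass 𝕜] [Fintype Z]
    (A : Z × Y) (b : Y) : copyDecoding A b ∈ stdSimplex 𝕜 Z := by
  have single_mem := single_mem_stdSimplex 𝕜 A.1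
  rwa [funext (Pi.single_apply A.1 (1 : 𝕜))] at single_mem

variable [DecidableEq Y] [Fintype Y] [Fintype Z]

theorem clickProb_guess [Semiring 𝕜] (f : X → Y → Z) (p : Y → 𝕜) (a : X) (b : Y) :
    clickProb guessEfficiency (guessEncoding f p) a b = p b := by
  rw [clickProb, sum_guessEfficiency_mul]
  simp [guessEncoding]

theorem postSelected_guess [DivisionSemiring 𝕜] (f : X → Y → Z) {p : Y → 𝕜} {b : Y}
    (hb : p b ≠ 0) (B : Z) (a : X) :
    postSelected guessEfficiency copyDecoding (guessEncoding f p) B a b =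
      if B = f a b then 1 else 0 := by
  have numerator : ∑ A, guessEfficiency A b * copyDecoding A b B * guessEncoding f p a A =
      guessEncoding f p a (B, b) := by
    simp only [mul_assoc, sum_guessEfficiency_mul]
    simp [copyDecoding]
  rw [postSelected, numerator, clickProb_guess, guessEncoding, ite_div, div_self hb, zero_div]

end GuessingStrategy

end DetectionLoophole

open DetectionLoophole

theorem dl_attack_3_log6_general {X Y Z 𝕜 : Type*} [Fintype Y] [DecidableEq Y] [Fintype Z]
    [DecidableEq Z] [DivisionSemiring 𝕜] [PartialOrder 𝕜] [ZeroLEOneClass 𝕜]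
    (f : X → Y → Z) {p : Y → 𝕜} (hp : p ∈ stdSimplex 𝕜 Y) (hp₀ : ∀ y, p y ≠ 0) :
    (∀ a, guessEncoding f p a ∈ stdSimplex 𝕜 (Z × Y)) ∧
    (∀ (A : Z × Y) (b : Y), copyDecoding A b ∈ stdSimplex 𝕜 Z) ∧
    (∀ a b, clickProb guessEfficiency (guessEncoding f p) a b = p b ∧ 0 < p b) ∧
    (∀ a b, postSelected guessEfficiency copyDecoding (guessEncoding f p) (f a b) a b = 1) :=
  ⟨guessEncoding_mem_stdSimplex f hp, copyDecoding_mem_stdSimplex,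
    fun a b => ⟨clickProb_guess f p a b, (hp.1 b).lt_of_ne' (hp₀ b)⟩,
    fun a b => (postSelected_guess f (hp₀ b) (f a b) a).trans (if_pos rfl)⟩

/-- detection-loophole attack with perfect worst-case success for
the 3 → log 6 random access code: with message set `M = Fin 2 × Fin 3` (a bit
`A₀` and a trit `A₁`), Alice's encoding `S((A₀,A₁)|a) = 1/3` if `A₀ = a A₁` and
`0` otherwise, Bob's efficiency `η((A₀,A₁),b) = 1` if `b = A₁` and `0`
otherwise, and Bob's decoding `Q(B|(A₀,A₁),b) = 1` if `B = A₀` and `0`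
otherwise, one gets: (i) `S` and `Q` are probability distributions, (ii) the
click probability `D(a,b) = ∑ A, η A b * S a A` equals `1/3 > 0`, and (iii) the
post-selected statistics are perfect:
`(∑ A, η A b * Q A b (a b) * S a A) / D a b = 1` for all `a, b`. -/
theorem dl_attack_3_log6
    (S : (Fin 3 → Fin 2) → Fin 2 × Fin 3 → ℝ)
    (hS : ∀ a A₀ A₁, S a (A₀, A₁) = if A₀ = a A₁ then 1 / 3 else 0)
    (η : Fin 2 × Fin 3 → Fin 3 → ℝ)
    (hη : ∀ A₀ A₁ b, η (A₀, A₁) b = if b = A₁ then 1 else 0)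
    (Q : Fin 2 × Fin 3 → Fin 3 → Fin 2 → ℝ)
    (hQ : ∀ A₀ A₁ b B, Q (A₀, A₁) b B = if B = A₀ then 1 else 0) :
    -- (i) S(·|a) and Q(·|(A₀,A₁),b) are probability distributions
    (∀ a, (∀ A, 0 ≤ S a A) ∧ ∑ A, S a A = 1) ∧
    (∀ A b, (∀ B, 0 ≤ Q A b B) ∧ ∑ B, Q A b B = 1) ∧
    -- (ii) the click probability equals 1/3 > 0
    (∀ (a : Fin 3 → Fin 2) (b : Fin 3),
      ∑ A, η A b * S a A = 1 / 3 ∧ (0 : ℝ) < 1 / 3) ∧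
    -- (iii) the post-selected statistics achieve perfect worst-case success
    (∀ (a : Fin 3 → Fin 2) (b : Fin 3),
      (∑ A, η A b * Q A b (a b) * S a A) / (∑ A, η A b * S a A) = 1) := by
  obtain ⟨rfl, rfl, rfl⟩ :
      S = guessEncoding (fun a => a) (fun _ => 1 / 3) ∧ η = guessEfficiency ∧ Q = copyDecoding :=
    ⟨funext₂ fun a A => hS a A.1 A.2, funext₂ fun A b => hη A.1 A.2 b,
      funext₃ fun A b B => hQ A.1 A.2 b B⟩
  exact dl_attack_3_log6_general (fun a => a) ⟨fun _ => by norm_num, by simp⟩ fun _ => by norm_num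
end
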